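/- arXiv:2307.05528 — 4 statements merged into one kernel-verified Lean document; each statement's English description precedes it below -/
import Mathlib

section
/- Let p ∈ (0,1/2), let r ∈ (0, 1−H_2(p)), let ε ∈ (0, 1−H_2(p)−r), let θ > 0, and set R = 1−H_2(p)−ε. Let n ≥ 1 be such that rn, pn, rpn and Rn are integers. Define E : [0, min{pn, rn}] → ℝ by E(x) = rn·H_2(x/(rn)) + 2(R−r)n + 2θn − (1−r)n·(1 − H_2((pn−x)/((1−r)n))). Then E is concave on [0, min{pn, rn}], and for every x ∈ [0, min{pn, rn}] one has E(x) ≤ E(rpn) = (R−r)n − εn + 2θn. -/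
/-!
Write `u = x/(rn)` and `v = (pn-x)/((1-r)n)`. Both are affine in `x` and lie in `[0,1]`
(for `v` this uses `r < 1 - H₂(p) ≤ 1 - p`), so `E` is a nonnegative combination of concave
functions plus a constant. Moreover `r u + (1-r) v = p` for every `x`, so Jensen's inequality
`r H₂(u) + (1-r) H₂(v) ≤ H₂(p)` bounds `E` by its value at `x = rpn`, where `u = v = p`.
-/

/-- The binary entropy function `H₂(x) = −x·log₂ x − (1−x)·log₂(1−x)` (with the convention
`log 0 = 0`, so `H₂ 0 = H₂ 1 = 0`). -/
noncomputable def binEnt (x : ℝ) : ℝ :=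
  -(x * Real.logb 2 x) - (1 - x) * Real.logb 2 (1 - x)

lemma binEnt_eq_binEntropy_div (x : ℝ) : binEnt x = Real.binEntropy x / Real.log 2 := by
  simp only [binEnt, Real.logb, Real.binEntropy, Real.log_inv]
  ring

lemma binEnt_concaveOn : ConcaveOn ℝ (Set.Icc 0 1) binEnt := by
  have h := Real.strictConcave_binEntropy.concaveOn.smul
    (inv_nonneg.mpr (Real.log_nonneg one_le_two))
  refine h.congr fun x _ => ?_
  simp only [smul_eq_mul, binEnt_eq_binEntropy_div]
  ring

/-- The term `-p log₂ p` alone is at least `p`, because `log₂ p ≤ -1`. -/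
lemma le_binEnt {p : ℝ} (hp0 : 0 < p) (hp : p < 1/2) : p ≤ binEnt p := by
  have h1 : Real.logb 2 p ≤ -1 := by
    rw [Real.logb_le_iff_le_rpow one_lt_two hp0, Real.rpow_neg_one]
    linarith
  have h2 : Real.logb 2 (1 - p) ≤ 0 :=
    Real.logb_nonpos one_lt_two (by linarith) (by linarith)
  unfold binEnt
  nlinarith

/-- With `p ∈ (0,1/2)`, `r ∈ (0,1−H₂(p))`, `ε ∈ (0,1−H₂(p)−r)`, `θ > 0`,
`R = 1−H₂(p)−ε`, and `n ≥ 1` with `rn, pn, rpn, Rn` integers, the exponent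
`E(x) = rn·H₂(x/(rn)) + 2(R−r)n + 2θn − (1−r)n·(1 − H₂((pn−x)/((1−r)n)))`
is concave on `[0, min{pn, rn}]` and attains its maximum at `x = rpn`, where
`E(rpn) = (R−r)n − εn + 2θn`. -/
theorem exponent_concave_and_max (p r ε θ R : ℝ) (n : ℕ)
    (hp0 : 0 < p) (hp : p < 1/2)
    (hr0 : 0 < r) (hr : r < 1 - binEnt p)
    (hε0 : 0 < ε) (hε : ε < 1 - binEnt p - r)
    (hθ : 0 < θ) (hn : 1 ≤ n)
    (hR : R = 1 - binEnt p - ε)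
    (hrn : ∃ a : ℕ, r * n = a) (hpn : ∃ a : ℕ, p * n = a)
    (hrpn : ∃ a : ℕ, r * p * n = a) (hRn : ∃ a : ℕ, R * n = a)
    (E : ℝ → ℝ)
    (hE : ∀ x : ℝ, E x = r * n * binEnt (x / (r * n)) + 2 * (R - r) * n + 2 * θ * n
      - (1 - r) * n * (1 - binEnt ((p * n - x) / ((1 - r) * n)))) :
    ConcaveOn ℝ (Set.Icc 0 (min (p * n) (r * n))) E ∧
    (∀ x ∈ Set.Icc (0 : ℝ) (min (p * n) (r * n)), E x ≤ E (r * p * n)) ∧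
    E (r * p * n) = (R - r) * n - ε * n + 2 * θ * n := by
  have hN : (0 : ℝ) < n := by exact_mod_cast hn
  have hrp : r < 1 - p := by linarith [le_binEnt hp0 hp]
  have hr1 : 0 < 1 - r := by linarith
  have hA : 0 < r * n := by positivity
  have hB : 0 < (1 - r) * n := by positivity
  have hu : ∀ x ∈ Set.Icc (0 : ℝ) (min (p * n) (r * n)),
      x / (r * n) ∈ Set.Icc (0 : ℝ) 1 := fun x hx =>
    ⟨div_nonneg hx.1 hA.le, (div_le_one hA).2 (hx.2.trans (min_le_right _ _))⟩
  have hv : ∀ x ∈ Set.Icc (0 : ℝ) (min (p * n) (r * n)),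
      (p * n - x) / ((1 - r) * n) ∈ Set.Icc (0 : ℝ) 1 := fun x hx =>
    ⟨div_nonneg (sub_nonneg.2 (hx.2.trans (min_le_left _ _))) hB.le,
      (div_le_one hB).2 (by nlinarith [hx.1])⟩
  have hval : E (r * p * n) = (R - r) * n - ε * n + 2 * θ * n := by
    have e1 : r * p * n / (r * n) = p := by field_simp
    have e2 : (p * n - r * p * n) / ((1 - r) * n) = p := by field_simp
    rw [hE, e1, e2, hR]
    ring
  refine ⟨⟨convex_Icc _ _, ?_⟩, ?_, hval⟩
  · intro x hx y hy a b ha hb hab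
    have j1 := binEnt_concaveOn.2 (hu x hx) (hu y hy) ha hb hab
    have j2 := binEnt_concaveOn.2 (hv x hx) (hv y hy) ha hb hab
    simp only [smul_eq_mul] at j1 j2 ⊢
    have e1 : a * (x / (r * n)) + b * (y / (r * n)) = (a * x + b * y) / (r * n) := by ring
    have e2 : a * ((p * n - x) / ((1 - r) * n)) + b * ((p * n - y) / ((1 - r) * n))
        = (p * n - (a * x + b * y)) / ((1 - r) * n) := by
      obtain rfl : b = 1 - a := by linarith
      ring
    rw [e1] at j1
    rw [e2] at j2
    have k1 := mul_le_mul_of_nonneg_left j1 hA.le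
    have k2 := mul_le_mul_of_nonneg_left j2 hB.le
    simp only [hE]
    obtain rfl : b = 1 - a := by linarith
    linarith
  · intro x hx
    have j := binEnt_concaveOn.2 (hu x hx) (hv x hx) hr0.le hr1.le (by ring)
    simp only [smul_eq_mul] at j
    have e : r * (x / (r * n)) + (1 - r) * ((p * n - x) / ((1 - r) * n)) = p := by
      field_simp
      ring
    rw [e] at j
    have k := mul_le_mul_of_nonneg_left j hN.le
    rw [hval, hE, hR]
    linarith
end

section
/- There exists, for every integer k ≥ 2, a constant α_k > 0 depending only on k with the following property. Let n ≥ 1, let R ∈ (0,1] and r ∈ [0,1] with Rn and rn integers and R > r, and let θ > 0. Let U be a finite set with |U| = 2^{Rn}, and let {X(u)}_{u∈U} be random vectors in F_2^n that are each uniformly distributed on F_2^n and k-wise independent. Fix a subset Z ⊆ {1,…,n} with |Z| = rn. For z ∈ F_2^{rn}, let O(Z,z) = {u ∈ U : the restriction of X(u) to the coordinates in Z equals z}. Then the probability that there exists some z ∈ F_2^{rn} with |O(Z,z)| > 2^{(R−r)n + θn} is at most α_k · 2^{−n(kθ − r)}. -/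
open MeasureTheory Finset

universe u

/-!
The proof is a `k`-th moment argument on binomial moments, with `α = k ^ k`.

Put `N = |U| = 2 ^ Rn`, `s = 2 ^ (θ n)` and `t = (N / 2 ^ rn) * s`, the size threshold.
If `t < k`, then `s < k` (because `N ≥ 2 ^ rn`) and the claimed bound is at least `1`.
If `t ≥ k`, fix `z` and write `O` for its consistent set. Any fixed `k`-set `T` of messages lies
in `O` with probability at most `2 ^ (-rn * k)` (`measure_restrict_le`), so the expected number
`C(|O|, k)` of `k`-subsets of `O` is at most `C(N, k) * 2 ^ (-rn * k)`. On the event `|O| > t`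
one has `C(|O|, k) ≥ (t / k) ^ k / k!` (`div_pow_le_choose`). Markov's inequality
(`markov_choose`), `k! * C(N, k) ≤ N ^ k`, and a union bound over the `2 ^ rn` values of `z`
give the result.
-/

/-- The number of vectors in `F₂^n` with prescribed coordinates on `Z`. -/
lemma card_restrict {n : ℕ} (Z : Finset (Fin n)) (z : {i // i ∈ Z} → ZMod 2) :
    (univ.filter (fun x : Fin n → ZMod 2 => ∀ i : {i // i ∈ Z}, x i.val = z i)).card
      = 2 ^ (n - Z.card) := by
  classical
  have h : univ.filter (fun x : Fin n → ZMod 2 => ∀ i : {i // i ∈ Z}, x i.val = z i)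
      = Fintype.piFinset (fun i : Fin n => if h : i ∈ Z then {z ⟨i, h⟩} else univ) := by
    ext x
    simp only [mem_filter, mem_univ, true_and, Fintype.mem_piFinset]
    constructor
    · intro hx i
      by_cases hi : i ∈ Z
      · simp [hi, hx ⟨i, hi⟩]
      · simp [hi]
    · intro hx i
      have := hx i.1
      simpa [i.2] using this
  rw [h, Fintype.card_piFinset]
  have h2 : ∀ i : Fin n,
      (if h : i ∈ Z then ({z ⟨i, h⟩} : Finset (ZMod 2)) else univ).card
        = if i ∈ Z then 1 else 2 := by
    intro i
    by_cases hi : i ∈ Z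
    · simp [hi]
    · simp [hi, ZMod.card]
  rw [Finset.prod_congr rfl (fun i _ => h2 i), Finset.prod_ite]
  simp only [prod_const, one_pow, one_mul]
  congr 1
  have := Finset.card_compl Z
  rw [Fintype.card_fin] at this
  rw [← this]
  congr 1
  ext i
  simp

/-- A fixed `k`-set of messages is entirely consistent with `z` with probability at most
`2 ^ (-|Z| * k)`: sum the joint law over all `k`-tuples of vectors restricting to `z`. -/
lemma measure_restrict_le {n k : ℕ} {U : Type} [Fintype U] {Ω : Type u} [MeasurableSpace Ω]
    (μ : Measure Ω) (X : U → Ω → (Fin n → ZMod 2))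
    (hunif : ∀ (u : U) (x : Fin n → ZMod 2), μ {ω | X u ω = x} = ((2 : ENNReal) ^ n)⁻¹)
    (T : Finset U) (hT : T.card = k)
    (hind : ∀ x : U → (Fin n → ZMod 2),
      μ {ω | ∀ u ∈ T, X u ω = x u} = ∏ u ∈ T, μ {ω | X u ω = x u})
    (Z : Finset (Fin n)) (z : {i // i ∈ Z} → ZMod 2) :
    μ {ω | ∀ u ∈ T, ∀ i : {i // i ∈ Z}, X u ω i.val = z i}
      ≤ ENNReal.ofReal ((((2 : ℝ) ^ Z.card) ^ k)⁻¹) := by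
  classical
  set S := univ.filter (fun x : Fin n → ZMod 2 => ∀ i : {i // i ∈ Z}, x i.val = z i) with hS
  -- outside `T` the tuple is pinned to `0`, so that each `T`-tuple is counted once
  set P : Finset (U → Fin n → ZMod 2) :=
    Fintype.piFinset (fun u => if u ∈ T then S else {0}) with hP
  have hsub : {ω | ∀ u ∈ T, ∀ i : {i // i ∈ Z}, X u ω i.val = z i}
      ⊆ ⋃ x ∈ P, {ω | ∀ u ∈ T, X u ω = x u} := by
    intro ω hω
    simp only [Set.mem_iUnion, Set.mem_ofPred_eq]
    refine ⟨fun u => if u ∈ T then X u ω else 0, ?_, ?_⟩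
    · rw [hP, Fintype.mem_piFinset]
      intro u
      by_cases hu : u ∈ T
      · simp only [hu, if_true, hS, mem_filter, mem_univ, true_and]
        exact hω u hu
      · simp [hu]
    · intro u hu
      simp [hu]
  have hcard : P.card = (2 ^ (n - Z.card)) ^ k := by
    rw [hP, Fintype.card_piFinset]
    have : ∀ u : U, (if u ∈ T then S else {0}).card
        = if u ∈ T then 2 ^ (n - Z.card) else 1 := by
      intro u
      by_cases hu : u ∈ T
      · simp only [hu, if_true]; exact card_restrict Z z
      · simp [hu]
    rw [Finset.prod_congr rfl (fun u _ => this u)]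
    simp [hT]
  have hZ : Z.card ≤ n := by simpa using Finset.card_le_univ Z
  calc μ {ω | ∀ u ∈ T, ∀ i : {i // i ∈ Z}, X u ω i.val = z i}
      ≤ μ (⋃ x ∈ P, {ω | ∀ u ∈ T, X u ω = x u}) := measure_mono hsub
    _ ≤ ∑ x ∈ P, μ {ω | ∀ u ∈ T, X u ω = x u} := measure_biUnion_finset_le _ _
    _ = ∑ x ∈ P, (((2 : ENNReal) ^ n)⁻¹) ^ k := by
        refine Finset.sum_congr rfl fun x _ => ?_
        rw [hind x, Finset.prod_congr rfl (fun u _ => hunif u (x u)), prod_const, hT]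
    _ = ENNReal.ofReal (((2 : ℝ) ^ (n - Z.card)) ^ k * (((2 : ℝ) ^ n)⁻¹) ^ k) := by
        rw [sum_const, hcard, nsmul_eq_mul, ENNReal.ofReal_mul (by positivity),
          ENNReal.ofReal_pow (by positivity), ENNReal.ofReal_pow (by positivity),
          ENNReal.ofReal_pow (by positivity), ENNReal.ofReal_inv_of_pos (by positivity),
          ENNReal.ofReal_pow (by positivity)]
        simp
    _ ≤ _ := by
        apply le_of_eq
        congr 1
        have h : (2 : ℝ) ^ n = 2 ^ (n - Z.card) * 2 ^ Z.card := by
          rw [← pow_add, Nat.sub_add_cancel hZ]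
        rw [← mul_pow, h, mul_inv, ← mul_assoc,
          mul_inv_cancel₀ (by positivity), one_mul, inv_pow]

/-- Markov's inequality for the number `C(|O|, k)` of `k`-subsets of a random finite set `O`. -/
lemma markov_choose {k : ℕ} {U : Type} [Fintype U] {Ω : Type u} [MeasurableSpace Ω]
    (μ : Measure Ω) (O : Ω → Finset U) (hO : ∀ u, MeasurableSet {ω | u ∈ O ω})
    (p : ENNReal) (hp : ∀ T : Finset U, T.card = k → μ {ω | T ⊆ O ω} ≤ p) (c : ENNReal) :
    c * μ {ω | c ≤ ((O ω).card.choose k : ENNReal)}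
      ≤ ((Fintype.card U).choose k : ENNReal) * p := by
  classical
  have hmeas : ∀ T : Finset U, MeasurableSet {ω | T ⊆ O ω} := by
    intro T
    have : {ω | T ⊆ O ω} = ⋂ u ∈ T, {ω | u ∈ O ω} := by
      ext ω
      simp [Finset.subset_iff]
    rw [this]
    exact Finset.measurableSet_biInter _ fun u _ => hO u
  have hcount : ∀ ω, ((O ω).card.choose k : ENNReal)
      = ∑ T ∈ powersetCard k (univ : Finset U),
          {ω | T ⊆ O ω}.indicator (fun _ => (1 : ENNReal)) ω := by
    intro ω
    rw [← card_powersetCard]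
    simp only [Set.indicator_apply, Set.mem_ofPred_eq]
    rw [Finset.sum_boole]
    congr 2
    ext T
    simp [mem_powersetCard, and_comm]
  simp only [hcount]
  refine (mul_meas_ge_le_lintegral (Finset.measurable_fun_sum _ fun T _ =>
    measurable_const.indicator (hmeas T)) c).trans ?_
  rw [lintegral_finsetSum _ fun T _ => measurable_const.indicator (hmeas T)]
  calc _ ≤ ∑ T ∈ powersetCard k (univ : Finset U), p := by
        refine Finset.sum_le_sum fun T hT => ?_
        rw [lintegral_indicator_const (hmeas T), one_mul]
        exact hp T (mem_powersetCard.mp hT).2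
    _ = _ := by simp [card_powersetCard]

lemma div_pow_le_choose {k m : ℕ} (hk : 1 ≤ k) (hm : k ≤ m) {t : ℝ} (ht0 : 0 ≤ t)
    (ht : t ≤ m) : (t / k) ^ k / k.factorial ≤ (m.choose k : ℝ) := by
  have h1 := Nat.pow_le_choose (α := ℝ) k m
  have hk' : (0 : ℝ) < k := by exact_mod_cast hk
  -- `k * (m + 1 - k) - m = (k - 1) * (m - k) ≥ 0`
  have h2 : t / k ≤ ((m + 1 - k : ℕ) : ℝ) := by
    rw [Nat.cast_sub (by omega), div_le_iff₀ hk']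
    push_cast
    have a : (1 : ℝ) ≤ k := by exact_mod_cast hk
    have b : (k : ℝ) ≤ m := by exact_mod_cast hm
    nlinarith [mul_nonneg (sub_nonneg.2 a) (sub_nonneg.2 b)]
  have h3 : (t / k) ^ k ≤ (((m + 1 - k : ℕ) : ℝ)) ^ k :=
    pow_le_pow_left₀ (by positivity) h2 k
  have hf : (0 : ℝ) < k.factorial := by exact_mod_cast k.factorial_pos
  exact (div_le_div_of_nonneg_right h3 hf.le).trans h1

/-- For every `k ≥ 2` there is `α_k > 0` such that: for `n ≥ 1`, rates
`R ∈ (0,1]`, `r ∈ [0,1]` with `R > r` and `Rn, rn` integers, `θ > 0`, a finite message set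
`U` with `|U| = 2^{Rn}`, and random vectors `{X(u)}_{u∈U}` in `F₂^n` that are each uniform
and `k`-wise independent, and any coordinate set `Z` with `|Z| = rn`: the probability that
some observation `z ∈ F₂^{rn}` has consistent set `O(Z,z)` of size `> 2^{(R−r)n+θn}` is at
most `α_k · 2^{−n(kθ−r)}`. -/
theorem consistent_set_size_bound (k : ℕ) (hk : 2 ≤ k) :
    ∃ α : ℝ, 0 < α ∧
      ∀ (n Rn rn : ℕ), 1 ≤ n →
      ∀ R r θ : ℝ, 0 < R → R ≤ 1 → 0 ≤ r → r ≤ 1 → r < R → 0 < θ →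
        R * n = Rn → r * n = rn →
      ∀ (U : Type) (_ : Fintype U), Fintype.card U = 2 ^ Rn →
      ∀ (Ω : Type u) (_ : MeasurableSpace Ω) (μ : Measure Ω) (_ : IsProbabilityMeasure μ)
        (X : U → Ω → (Fin n → ZMod 2)),
        (∀ (u : U) (x : Fin n → ZMod 2), MeasurableSet {ω | X u ω = x}) →
        (∀ (u : U) (x : Fin n → ZMod 2), μ {ω | X u ω = x} = ((2 : ENNReal) ^ n)⁻¹) →
        (∀ T : Finset U, T.card = k → ∀ x : U → (Fin n → ZMod 2),
          μ {ω | ∀ u ∈ T, X u ω = x u} = ∏ u ∈ T, μ {ω | X u ω = x u}) →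
      ∀ Z : Finset (Fin n), Z.card = rn →
        μ {ω | ∃ z : {i // i ∈ Z} → ZMod 2,
            (2 : ℝ) ^ ((R - r) * n + θ * n) <
              ((Finset.univ.filter
                (fun u : U => ∀ i : {i // i ∈ Z}, X u ω i.val = z i)).card : ℝ)}
          ≤ ENNReal.ofReal (α * 2 ^ (-(n : ℝ) * (k * θ - r))) := by
  have hk0 : (0 : ℝ) < k := by exact_mod_cast (by omega : 0 < k)
  refine ⟨(k : ℝ) ^ k, by positivity, ?_⟩
  intro n Rn rn hn R r θ hR hR1 hr hr1 hrR hθ hRn hrn U _ hU Ω _ μ _ X hmeas hunif hind Z hZ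
  have hn0 : (0 : ℝ) < n := by exact_mod_cast hn
  set s : ℝ := (2 : ℝ) ^ (θ * n) with hs
  have hs0 : 0 < s := by positivity
  have ht : (2 : ℝ) ^ ((R - r) * n + θ * n) = 2 ^ Rn / 2 ^ rn * s := by
    rw [Real.rpow_add two_pos, sub_mul, Real.rpow_sub two_pos, hRn, hrn, Real.rpow_natCast,
      Real.rpow_natCast]
  have htarget : (2 : ℝ) ^ (-(n : ℝ) * (k * θ - r)) = 2 ^ rn / s ^ k := by
    rw [hs, ← Real.rpow_natCast, ← Real.rpow_natCast, ← Real.rpow_mul two_pos.le,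
      ← Real.rpow_sub two_pos, ← hrn]
    congr 1
    ring
  rw [ht, htarget]
  set t : ℝ := 2 ^ Rn / 2 ^ rn * s with ht'
  have ht0 : 0 < t := by positivity
  have hle : rn ≤ Rn := by
    have : (rn : ℝ) ≤ Rn := by rw [← hRn, ← hrn]; exact (mul_lt_mul_of_pos_right hrR hn0).le
    exact_mod_cast this
  rcases lt_or_ge t k with htk | htk
  · -- here `s ≤ t < k`, so the right-hand side is at least `1`
    refine prob_le_one.trans ?_
    rw [← ENNReal.ofReal_one]
    apply ENNReal.ofReal_le_ofReal
    have h1 : (1 : ℝ) ≤ 2 ^ Rn / 2 ^ rn := by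
      rw [one_le_div (by positivity)]
      exact pow_le_pow_right₀ one_le_two hle
    have hsk : s ≤ k := by
      refine le_trans ?_ htk.le
      rw [ht']
      exact le_mul_of_one_le_left hs0.le h1
    have h2 : s ^ k ≤ (k : ℝ) ^ k := pow_le_pow_left₀ hs0.le hsk k
    have h3 : (1 : ℝ) ≤ 2 ^ rn := one_le_pow₀ one_le_two
    rw [← mul_div_assoc, one_le_div (by positivity)]
    nlinarith [pow_pos hs0 k]
  · set c : ℝ := (t / k) ^ k / k.factorial with hc
    have hf : (0 : ℝ) < k.factorial := by exact_mod_cast k.factorial_pos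
    have hc0 : 0 < c := by positivity
    set p : ℝ := (((2 : ℝ) ^ rn) ^ k)⁻¹ with hp
    have hp0 : 0 < p := by positivity
    set O : ({i // i ∈ Z} → ZMod 2) → Ω → Finset U := fun z ω =>
      univ.filter (fun u : U => ∀ i : {i // i ∈ Z}, X u ω i.val = z i) with hO
    have hOmeas : ∀ z u, MeasurableSet {ω | u ∈ O z ω} := by
      intro z u
      have : {ω | u ∈ O z ω} = ⋃ x ∈ univ.filter
          (fun x : Fin n → ZMod 2 => ∀ i : {i // i ∈ Z}, x i.val = z i), {ω | X u ω = x} := by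
        ext ω
        simp [hO]
      rw [this]
      exact Finset.measurableSet_biUnion _ fun x _ => hmeas u x
    have hone : ∀ z, μ {ω | t < ((O z ω).card : ℝ)}
        ≤ ENNReal.ofReal (((2 ^ Rn).choose k : ℝ) * p / c) := by
      intro z
      have hM := markov_choose (k := k) μ (O z) (hOmeas z) (ENNReal.ofReal p) (by
        intro T hT
        have := measure_restrict_le μ X hunif T hT (hind T hT) Z z
        rw [hZ] at this
        refine le_trans (measure_mono ?_) this
        intro ω hω u hu
        have h' := hω hu
        simpa [hO] using h') (ENNReal.ofReal c)
      rw [ENNReal.ofReal_div_of_pos hc0, ENNReal.le_div_iff_mul_le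
        (Or.inl (by simpa using hc0)) (Or.inl ENNReal.ofReal_ne_top), mul_comm,
        ENNReal.ofReal_mul (by positivity), ENNReal.ofReal_natCast]
      rw [hU] at hM
      refine le_trans ?_ hM
      gcongr with ω
      intro hω
      have hkc : k ≤ (O z ω).card := by exact_mod_cast (htk.trans hω.le)
      have := div_pow_le_choose (by omega : 1 ≤ k) hkc ht0.le hω.le
      rw [← ENNReal.ofReal_natCast]
      exact ENNReal.ofReal_le_ofReal this
    have hunion : {ω | ∃ z : {i // i ∈ Z} → ZMod 2, t < ((O z ω).card : ℝ)}
        = ⋃ z ∈ (univ : Finset ({i // i ∈ Z} → ZMod 2)), {ω | t < ((O z ω).card : ℝ)} := by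
      ext ω
      simp
    change μ {ω | ∃ z : {i // i ∈ Z} → ZMod 2, t < ((O z ω).card : ℝ)} ≤ _
    rw [hunion]
    refine (measure_biUnion_finset_le _ _).trans ((Finset.sum_le_sum fun z _ => hone z).trans ?_)
    rw [sum_const, card_univ, Fintype.card_fun, ZMod.card, Fintype.card_coe, hZ, nsmul_eq_mul,
      ← ENNReal.ofReal_natCast, ← ENNReal.ofReal_mul (by positivity)]
    apply ENNReal.ofReal_le_ofReal
    have hch : ((2 ^ Rn).choose k : ℝ) ≤ ((2 : ℝ) ^ Rn) ^ k / k.factorial := by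
      have := Nat.choose_le_pow_div (α := ℝ) k (2 ^ Rn)
      exact_mod_cast this
    calc ((2 ^ rn : ℕ) : ℝ) * (((2 ^ Rn).choose k : ℝ) * p / c)
        ≤ (2 : ℝ) ^ rn * ((((2 : ℝ) ^ Rn) ^ k / k.factorial) * p / c) := by
          push_cast
          gcongr
      _ = (k : ℝ) ^ k * (2 ^ rn / s ^ k) := by
          rw [hc, hp, ht', div_pow, mul_pow, div_pow]
          field_simp
end

section
/- (Sufficient Condition 1.) Let p ∈ (0,1/2), r ∈ [0,1], R ∈ (0,1], δ > 0, and n ≥ 1 with Rn, rn, pn integers. Let U = F_2^{Rn} and let X : U → F_2^n be any code. Let W be a probability mass function on the rn-element subsets of {1,…,n}, and for each such subset Z and each z ∈ F_2^{rn} let W(·|Z,z) be a probability mass function on F_2^n supported on vectors of Hamming weight at most pn. Let φ : F_2^n → U be any min-distance decoder, i.e., a function with d_H(X(φ(y)), y) ≤ d_H(X(u), y) for all y ∈ F_2^n and u ∈ U. Suppose that for every rn-element subset Z, every z ∈ F_2^{rn}, and every e ∈ F_2^n of Hamming weight at most pn, one has |A(e) ∩ O(Z,z)| ≤ δ·2^{(R−r)n}.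 Then, with U_msg uniform on U, Z drawn from W, and e drawn from W(·|Z, Z(X(U_msg))), the probability of decoding error satisfies P(φ(X(U_msg) ⊕ e) ≠ U_msg) ≤ δ. -/
/-!
A min-distance decoder errs on `X u + e`, with `e` of weight at most `pn`, only if `φ (X u + e)` is a
message other than `u` whose codeword lies within `pn` of `X u + e`, that is, only if `u ∈ A(e)`
(`confusable_of_decoding_error`).

Fix an `rn`-subset `Z` and group the messages by the view `z = Z(X(u))`. Given `z`, the law of `e` no
longer depends on `u`, so the total error mass over the group is the `We Z z`-average over `e` of
the number of erring messages in `O(Z,z)`, which is at most `|A(e) ∩ O(Z,z)| ≤ δ·2^{(R-r)n}`.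
Summing over the `2^{rn}` views gives at most `δ·2^{Rn}` (`sum_le_of_fiberwise_card_le`). Averaging
over `Z` and dividing by `|U| = 2^{Rn}` gives `δ`.
-/

/-- If a min-distance decoder errs under an error of weight at most `t`, its wrong output witnesses
that `u` is confusable: the true codeword is within `t` of the received word, so the decoded
one is too. -/
lemma confusable_of_decoding_error {U : Type*} {n t : ℕ} {X : U → (Fin n → ZMod 2)}
    {φ : (Fin n → ZMod 2) → U}
    (hφ : ∀ y u, hammingDist (X (φ y)) y ≤ hammingDist (X u) y)
    {u : U} {e : Fin n → ZMod 2} (he : hammingNorm e ≤ t) (herr : φ (X u + e) ≠ u) :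
    ∃ u', u' ≠ u ∧ hammingDist (X u') (X u + e) ≤ t := by
  refine ⟨φ (X u + e), herr, (hφ _ u).trans ?_⟩
  have h : hammingDist (X u) (X u + e) = hammingNorm e := by
    rw [hammingDist_eq_hammingNorm]
    simp
  exact h.trans_le he

/-- Let `v u` be the view of message `u`, and let `w z` be a probability mass function on errors for
each view `z`. If, for every view `z` and every error `e` in the support of `w z`, at most `c`
messages with view `z` are bad for `e`, then the total bad mass over all messages is at most
`c` times the number of views. -/
lemma sum_le_of_fiberwise_card_le {U V E : Type*} [Fintype U] [Fintype V] [Fintype E]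
    [DecidableEq V] (v : U → V) (w : V → E → ℝ) (hw0 : ∀ z e, 0 ≤ w z e)
    (hw1 : ∀ z, ∑ e, w z e = 1) (good : U → E → Prop) [∀ u e, Decidable (good u e)] (c : ℝ)
    (hc : ∀ z e, w z e ≠ 0 →
      ((Finset.univ.filter (fun u => ¬ good u e ∧ v u = z)).card : ℝ) ≤ c) :
    ∑ u, ∑ e, w (v u) e * (if good u e then 0 else 1) ≤ Fintype.card V * c := by
  calc ∑ u, ∑ e, w (v u) e * (if good u e then (0 : ℝ) else 1)
      = ∑ z, ∑ u with v u = z, ∑ e, w (v u) e * (if good u e then (0 : ℝ) else 1) :=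
        (Finset.sum_fiberwise _ _ _).symm
    _ ≤ ∑ _z : V, c := by
        refine Finset.sum_le_sum fun z _ => ?_
        rw [Finset.sum_comm]
        calc ∑ e, ∑ u with v u = z, w (v u) e * (if good u e then (0 : ℝ) else 1)
            = ∑ e, w z e * ((Finset.univ.filter (fun u => ¬ good u e ∧ v u = z)).card : ℝ) := by
              refine Finset.sum_congr rfl fun e _ => ?_
              rw [Finset.card_filter, Nat.cast_sum, Finset.mul_sum, Finset.sum_filter]
              refine Finset.sum_congr rfl fun u _ => ?_
              by_cases h1 : v u = z <;> by_cases h2 : good u e <;> simp [h1, h2]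
          _ ≤ ∑ e, w z e * c := by
              refine Finset.sum_le_sum fun e _ => ?_
              by_cases h : w z e = 0
              · simp [h]
              · exact mul_le_mul_of_nonneg_left (hc z e h) (hw0 z e)
          _ = c := by rw [← Finset.sum_mul, hw1, one_mul]
    _ = Fintype.card V * c := by simp

open Finset

/-- Sufficient Condition 1: Let `U = F₂^{Rn}`, `X : U → F₂^n` a code, `W` a PMF
on `rn`-subsets `Z` of coordinates, `W(·|Z,z)` PMFs on error vectors of weight `≤ pn`, and
`φ` a min-distance decoder.  If for every `Z`, `z`, `e` (of weight `≤ pn`) the confusable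
consistent set satisfies `|A(e) ∩ O(Z,z)| ≤ δ·2^{(R−r)n}`, then the average probability of
decoding error is at most `δ`. -/
theorem sufficient_condition_one
    (p r R δ : ℝ) (n Rn rn pn : ℕ)
    (hp0 : 0 < p) (hp : p < 1/2) (hr0 : 0 ≤ r) (hr1 : r ≤ 1)
    (hR0 : 0 < R) (hR1 : R ≤ 1) (hδ : 0 < δ) (hn : 1 ≤ n)
    (hRn : R * n = Rn) (hrn : r * n = rn) (hpn : p * n = pn)
    (X : (Fin Rn → ZMod 2) → (Fin n → ZMod 2))
    (W : Finset (Fin n) → ℝ)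
    (hW0 : ∀ Z, 0 ≤ W Z)
    (hWsupp : ∀ Z, W Z ≠ 0 → Z.card = rn)
    (hWsum : ∑ Z : Finset (Fin n), W Z = 1)
    (We : (Z : Finset (Fin n)) → ({i // i ∈ Z} → ZMod 2) → (Fin n → ZMod 2) → ℝ)
    (hWe0 : ∀ Z z e, 0 ≤ We Z z e)
    (hWesupp : ∀ Z z e, We Z z e ≠ 0 → hammingNorm e ≤ pn)
    (hWesum : ∀ Z z, ∑ e : Fin n → ZMod 2, We Z z e = 1)
    (φ : (Fin n → ZMod 2) → (Fin Rn → ZMod 2))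
    (hφ : ∀ (y : Fin n → ZMod 2) (u : Fin Rn → ZMod 2),
      hammingDist (X (φ y)) y ≤ hammingDist (X u) y)
    (hmain : ∀ Z : Finset (Fin n), Z.card = rn →
      ∀ z : {i // i ∈ Z} → ZMod 2,
      ∀ e : Fin n → ZMod 2, hammingNorm e ≤ pn →
        ((Finset.univ.filter (fun u : Fin Rn → ZMod 2 =>
            (∃ u' : Fin Rn → ZMod 2, u' ≠ u ∧ hammingDist (X u') (X u + e) ≤ pn) ∧
            (fun i : {i // i ∈ Z} => X u i.val) = z)).card : ℝ)
          ≤ δ * (2 : ℝ) ^ ((R - r) * n)) :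
    (∑ u : Fin Rn → ZMod 2, ∑ Z : Finset (Fin n), ∑ e : Fin n → ZMod 2,
        W Z * We Z (fun i : {i // i ∈ Z} => X u i.val) e *
          (if φ (X u + e) = u then 0 else 1))
      / (Fintype.card (Fin Rn → ZMod 2) : ℝ) ≤ δ := by
  have hcard : (Fintype.card (Fin Rn → ZMod 2) : ℝ) = 2 ^ Rn := by simp [ZMod.card]
  rw [hcard, div_le_iff₀ (by positivity), Finset.sum_comm]
  have hZ : ∀ Z : Finset (Fin n), Z.card = rn →
      ∑ u : Fin Rn → ZMod 2, ∑ e : Fin n → ZMod 2,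
        We Z (fun i : {i // i ∈ Z} => X u i.val) e * (if φ (X u + e) = u then 0 else 1)
        ≤ δ * 2 ^ Rn := by
    intro Z hcZ
    refine (sum_le_of_fiberwise_card_le (fun u (i : {i // i ∈ Z}) => X u i.val) (We Z) (hWe0 Z)
      (hWesum Z) (fun u e => φ (X u + e) = u) (δ * (2 : ℝ) ^ ((R - r) * n)) ?_).trans_eq ?_
    · intro z e hwe
      have he := hWesupp Z z e hwe
      refine le_trans ?_ (hmain Z hcZ z e he)
      refine Nat.cast_le.mpr (Finset.card_le_card fun u hu => ?_)
      simp only [Finset.mem_filter, Finset.mem_univ, true_and] at hu ⊢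
      exact ⟨confusable_of_decoding_error hφ he hu.1, hu.2⟩
    · -- there are `2^{rn}` views, and `2^{rn} · 2^{(R-r)n} = 2^{Rn}`
      have hV : (Fintype.card ({i // i ∈ Z} → ZMod 2) : ℝ) = 2 ^ rn := by
        simp [ZMod.card, hcZ]
      rw [hV, sub_mul, hRn, hrn, Real.rpow_sub two_pos, Real.rpow_natCast, Real.rpow_natCast]
      field_simp
  calc ∑ Z : Finset (Fin n), ∑ u : Fin Rn → ZMod 2, ∑ e : Fin n → ZMod 2,
        W Z * We Z (fun i : {i // i ∈ Z} => X u i.val) e * (if φ (X u + e) = u then 0 else 1)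
      ≤ ∑ Z : Finset (Fin n), W Z * (δ * 2 ^ Rn) := by
        refine Finset.sum_le_sum fun Z _ => ?_
        simp only [mul_assoc, ← Finset.mul_sum]
        by_cases h : W Z = 0
        · simp [h]
        · exact mul_le_mul_of_nonneg_left (hZ Z (hWsupp Z h)) (hW0 Z)
    _ = δ * 2 ^ Rn := by rw [← Finset.sum_mul, hWsum, one_mul]
end

section
/- (Sufficient Condition 2.) In the adversarial wiretap setting with parameters p ∈ (0,1/2), r ∈ (0,1), R ∈ (r,1], δ > 0, θ > 0, k ≥ 2, and n ≥ 1 with Rn, rn, pn integers: let U = F_2^{Rn}, let h : U → F_2^m be such that any k distinct vectors among {h(u)} are linearly independent over F_2, let G be uniform in F_2^{n×m} and X(u) = G·h(u), and let S_1,…,S_{10n} ⊆ U be subsets such that every ordered pair of distinct messages (u,u') has some i with u ∈ S_i, u' ∉ S_i. For each rn-subset Z of {1,…,n}, z ∈ F_2^{rn}, e ∈ F_2^n of weight ≤ pn, let V(Z,z,e) = Σ_{i=1}^{10n} Σ_{u ∈ O(Z,z)∩S_i} Σ_{u'∈S_i^c} 1{X(u') ∈ B_{pn}(X(u) ⊕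 e)}, and let H(Z) be the event that some s ∈ F_2^{rn} has |O(Z,s)| > 2^{(R−r)n+θn}. Suppose there are β > 0 and η > 0 such that (i) for every Z, z, e as above and every A ∈ F_2^{rn×m} for which {Z(G)=A} has positive probability and implies H(Z)^c, one has P(V(Z,z,e) > δ·2^{(R−r)n} | Z(G)=A) ≤ β, and (ii) P(H(Z)) ≤ η for every Z. Then with probability at least 1 − 2^{(1+r+H_2(p))n}·β − 2^n·η over the choice of G, the code X satisfies: for every adversary strategy (a PMF W on rn-subsets Z and PMFs W(·|Z,z) on errors of weight ≤ pn) and any min-distance decoder φ, the probability of decoding error P(φ(X(U_msg) ⊕ e) ≠ U_msg) ≤ δ, where U_msg is uniform on U, Z ~ W, e ~ W(·|Z, Z(X(U_msg))). -/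
/-!
If every confusability sum `V(Z,z,e)` is at most `δ · 2 ^ ((R - r) n)`, the code is reliable
(`reliable_of_confus_le`): a decoding error on the message `u` produces some `u' ≠ u` with `X u'` in
the ball of radius `pn` around `X u + e`, and a set `S i` separating `u` from `u'` counts that pair
in `V` (`sum_err_le_confus`). Hence for fixed `Z, z, e` at most `V(Z,z,e)` messages of `O(Z,z)` are
decoded wrongly; summing over the `2 ^ (rn)` observations `z`, averaging over the adversary's
choices and dividing by `2 ^ (Rn)` gives `δ`.

The code therefore fails only if `H(Z)` occurs for some `Z`, or `V(Z,z,e)` is large while `H(Z)`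
does not occur, for some `Z, z, e`. Since `H(Z)` depends on `Z(G)` only, conditioning on `Z(G)`
bounds the probability of the latter event by `β` (`unifPr_and_not_le`). The union bound runs over at
most `2 ^ n` sets `Z`, `2 ^ (rn)` strings `z`, and `2 ^ (H₂(p) n)` errors `e` (`card_ball_le`).
-/

open Finset

/-- Probability of an event `P` under the uniform distribution on a finite type `Ω`. -/
noncomputable def unifPr {Ω : Type*} [Fintype Ω] (P : Ω → Prop) : ℝ :=
  letI : DecidablePred P := fun _ => Classical.propDecidable _
  ((Finset.univ.filter P).card : ℝ) / (Fintype.card Ω : ℝ)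

/-- Conditional probability `P(P | Q)` under the uniform distribution on a finite type. -/
noncomputable def unifCondPr {Ω : Type*} [Fintype Ω] (P Q : Ω → Prop) : ℝ :=
  letI : DecidablePred (fun ω => P ω ∧ Q ω) := fun _ => Classical.propDecidable _
  letI : DecidablePred Q := fun _ => Classical.propDecidable _
  ((Finset.univ.filter fun ω => P ω ∧ Q ω).card : ℝ) /
    ((Finset.univ.filter Q).card : ℝ)

/-- The submatrix of rows of `G` indexed by the coordinate set `Z`. -/
def rowRestrict {n m : ℕ} (Z : Finset (Fin n)) (G : Matrix (Fin n) (Fin m) (ZMod 2)) :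
    Matrix {i // i ∈ Z} (Fin m) (ZMod 2) :=
  fun i j => G i.val j

/-- The adversary's strategy is admissible: `W` is a PMF supported on `rn`-element coordinate
sets and each `We Z z` is a PMF supported on error vectors of Hamming weight at most `pn`. -/
def ValidAdversary (n rn pn : ℕ) (W : Finset (Fin n) → ℝ)
    (We : (Z : Finset (Fin n)) → ({i // i ∈ Z} → ZMod 2) → (Fin n → ZMod 2) → ℝ) : Prop :=
  (∀ Z, 0 ≤ W Z) ∧ (∀ Z, W Z ≠ 0 → Z.card = rn) ∧
  (∑ Z : Finset (Fin n), W Z = 1) ∧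
  (∀ (Z : Finset (Fin n)) (z : {i // i ∈ Z} → ZMod 2) (e : Fin n → ZMod 2),
    0 ≤ We Z z e) ∧
  (∀ (Z : Finset (Fin n)) (z : {i // i ∈ Z} → ZMod 2) (e : Fin n → ZMod 2),
    We Z z e ≠ 0 → hammingNorm e ≤ pn) ∧
  (∀ (Z : Finset (Fin n)) (z : {i // i ∈ Z} → ZMod 2),
    ∑ e : Fin n → ZMod 2, We Z z e = 1)

/-- `φ` is a minimum-distance decoder for the code `X`. -/
def IsMinDistDecoder {Rn n : ℕ} (X : (Fin Rn → ZMod 2) → (Fin n → ZMod 2))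
    (φ : (Fin n → ZMod 2) → (Fin Rn → ZMod 2)) : Prop :=
  ∀ (y : Fin n → ZMod 2) (u : Fin Rn → ZMod 2),
    hammingDist (X (φ y)) y ≤ hammingDist (X u) y

/-- The average probability of decoding error of the code `X` against the adversary
`(W, We)` and decoder `φ`: the message is uniform, the coordinate set `Z ~ W`, and the error
`e ~ We Z (Z(X u))`. -/
noncomputable def decodeErrProb {Rn n : ℕ}
    (X : (Fin Rn → ZMod 2) → (Fin n → ZMod 2))
    (W : Finset (Fin n) → ℝ)
    (We : (Z : Finset (Fin n)) → ({i // i ∈ Z} → ZMod 2) → (Fin n → ZMod 2) → ℝ)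
    (φ : (Fin n → ZMod 2) → (Fin Rn → ZMod 2)) : ℝ :=
  (∑ u : Fin Rn → ZMod 2, ∑ Z : Finset (Fin n), ∑ e : Fin n → ZMod 2,
      W Z * We Z (fun i : {i // i ∈ Z} => X u i.val) e *
        (if φ (X u + e) = u then 0 else 1))
    / (Fintype.card (Fin Rn → ZMod 2) : ℝ)

/-- The code `X` allows reliable communication over the `AWTC_{p,r}` with probability of
decoding error at most `δ`: every admissible adversary strategy and every min-distance
decoder yield average error probability at most `δ`. -/
def ReliableCode (n rn pn Rn : ℕ) (δ : ℝ)
    (X : (Fin Rn → ZMod 2) → (Fin n → ZMod 2)) : Prop :=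
  ∀ (W : Finset (Fin n) → ℝ)
    (We : (Z : Finset (Fin n)) → ({i // i ∈ Z} → ZMod 2) → (Fin n → ZMod 2) → ℝ)
    (φ : (Fin n → ZMod 2) → (Fin Rn → ZMod 2)),
    ValidAdversary n rn pn W We → IsMinDistDecoder X φ →
    decodeErrProb X W We φ ≤ δ

/-! ### Uniform probabilities on a finite type -/

lemma unifPr_eq {Ω : Type*} [Fintype Ω] (P : Ω → Prop) [DecidablePred P] :
    unifPr P = ((Finset.univ.filter P).card : ℝ) / (Fintype.card Ω : ℝ) := by
  unfold unifPr
  congr!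

lemma unifCondPr_eq {Ω : Type*} [Fintype Ω] (P Q : Ω → Prop)
    [DecidablePred fun ω => P ω ∧ Q ω] [DecidablePred Q] :
    unifCondPr P Q = ((Finset.univ.filter fun ω => P ω ∧ Q ω).card : ℝ) /
      ((Finset.univ.filter Q).card : ℝ) := by
  unfold unifCondPr
  congr!

lemma unifPr_mono {Ω : Type*} [Fintype Ω] {P Q : Ω → Prop} (hPQ : ∀ ω, P ω → Q ω) :
    unifPr P ≤ unifPr Q := by
  classical
  rw [unifPr_eq, unifPr_eq]
  gcongr
  exact hPQ _

lemma unifPr_or_le {Ω : Type*} [Fintype Ω] (P Q : Ω → Prop) :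
    unifPr (fun ω => P ω ∨ Q ω) ≤ unifPr P + unifPr Q := by
  classical
  rw [unifPr_eq, unifPr_eq, unifPr_eq, ← add_div, Finset.filter_or]
  gcongr
  exact_mod_cast Finset.card_union_le _ _

lemma unifPr_exists_le {Ω ι : Type*} [Fintype Ω] (I : Finset ι) (P : ι → Ω → Prop) :
    unifPr (fun ω => ∃ i ∈ I, P i ω) ≤ ∑ i ∈ I, unifPr (P i) := by
  classical
  simp only [unifPr_eq, ← Finset.sum_div]
  gcongr
  have hsub : (Finset.univ.filter fun ω => ∃ i ∈ I, P i ω) =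
      I.biUnion fun i => Finset.univ.filter (P i) := by
    ext ω
    simp
  rw [hsub]
  exact_mod_cast Finset.card_biUnion_le

lemma unifPr_compl {Ω : Type*} [Fintype Ω] [Nonempty Ω] (P : Ω → Prop) :
    unifPr P = 1 - unifPr (fun ω => ¬ P ω) := by
  classical
  rw [unifPr_eq, unifPr_eq, eq_sub_iff_add_eq, ← add_div]
  have hcard := Finset.card_filter_add_card_filter_not (s := (Finset.univ : Finset Ω)) P
  rw [Finset.card_univ] at hcard
  rw [div_eq_one_iff_eq (by exact_mod_cast Fintype.card_ne_zero)]
  exact_mod_cast hcard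

lemma unifPr_pos {Ω : Type*} [Fintype Ω] (P : Ω → Prop) (ω : Ω) (hω : P ω) :
    0 < unifPr P := by
  classical
  have : Nonempty Ω := ⟨ω⟩
  rw [unifPr_eq]
  have h1 : 0 < (Finset.univ.filter P).card := Finset.card_pos.mpr ⟨ω, by simp [hω]⟩
  have h2 : 0 < Fintype.card Ω := Fintype.card_pos
  positivity

/-- Law of total probability over the values of `f`: the event `H` is a function of `f`, so each
fibre of `f` either lies inside `H`, where it contributes nothing, or avoids `H`, where the
conditional bound applies. -/
lemma unifPr_and_not_le {Ω α : Type*} [Fintype Ω] [Nonempty Ω] (f : Ω → α)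
    (P H : Ω → Prop) (hH : ∀ ω ω', f ω = f ω' → H ω → H ω') (β : ℝ) (hβ : 0 ≤ β)
    (hc : ∀ a, 0 < unifPr (fun ω => f ω = a) → (∀ ω, f ω = a → ¬ H ω) →
      unifCondPr P (fun ω => f ω = a) ≤ β) :
    unifPr (fun ω => P ω ∧ ¬ H ω) ≤ β := by
  classical
  have hcard : (0 : ℝ) < Fintype.card Ω := by exact_mod_cast Fintype.card_pos
  rw [unifPr_eq, div_le_iff₀ hcard]
  have hfib : ∀ s : Finset Ω, (s.card : ℝ) =
      ∑ a ∈ Finset.univ.image f, ((s.filter fun ω => f ω = a).card : ℝ) := by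
    intro s
    exact_mod_cast Finset.card_eq_sum_card_fiberwise
      (fun ω _ => Finset.mem_coe.mpr (Finset.mem_image_of_mem f (Finset.mem_univ ω)))
  rw [hfib, ← Finset.card_univ, hfib Finset.univ, Finset.mul_sum]
  refine Finset.sum_le_sum fun a ha => ?_
  obtain ⟨ω₀, -, rfl⟩ := Finset.mem_image.mp ha
  by_cases h0 : H ω₀
  · have hempty : ((Finset.univ.filter fun ω => P ω ∧ ¬ H ω).filter fun ω => f ω = f ω₀) = ∅ := by
      ext ω
      simp only [Finset.mem_filter, Finset.mem_univ, true_and, Finset.notMem_empty, iff_false]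
      rintro ⟨⟨-, hn⟩, he⟩
      exact hn (hH _ _ he.symm h0)
    rw [hempty]
    simpa using by positivity
  · have hb := hc (f ω₀) (unifPr_pos _ ω₀ rfl) (fun ω he hω => h0 (hH _ _ he hω))
    have hpos : (0 : ℝ) < (Finset.univ.filter fun ω => f ω = f ω₀).card := by
      exact_mod_cast Finset.card_pos.mpr ⟨ω₀, by simp⟩
    rw [unifCondPr_eq, div_le_iff₀ hpos] at hb
    refine le_trans ?_ hb
    rw [Finset.filter_filter]
    gcongr
    exact And.left

/-! ### Volume of a Hamming ball -/

lemma sum_prod_bernoulli (n : ℕ) (p : ℝ) :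
    ∑ e : Fin n → ZMod 2, p ^ hammingNorm e * (1 - p) ^ (n - hammingNorm e) = 1 := by
  have hprod : ∀ e : Fin n → ZMod 2, p ^ hammingNorm e * (1 - p) ^ (n - hammingNorm e) =
      ∏ i, if e i ≠ 0 then p else 1 - p := by
    intro e
    have hcard := Finset.card_filter_add_card_filter_not
      (s := (Finset.univ : Finset (Fin n))) (fun i => e i ≠ 0)
    rw [Finset.prod_ite, Finset.prod_const, Finset.prod_const]
    have : n - hammingNorm e = (Finset.univ.filter fun i => ¬ e i ≠ 0).card := by
      unfold hammingNorm
      simp only [Finset.card_univ, Fintype.card_fin] at hcard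
      omega
    rw [this]
    rfl
  simp only [hprod]
  rw [← Fintype.piFinset_univ, ← Finset.prod_univ_sum (fun _ : Fin n => Finset.univ)
    (fun _ (x : ZMod 2) => if x ≠ 0 then p else 1 - p)]
  refine Finset.prod_eq_one fun i _ => ?_
  have : (Finset.univ : Finset (ZMod 2)) = {0, 1} := by decide
  rw [this, Finset.sum_pair (by decide)]
  simp

/-- The entropy bound on the volume of a Hamming ball: under the i.i.d. Bernoulli(`p`) measure,
each point of the ball of radius `pn` has mass at least `2 ^ (-H₂(p) n)`. -/
lemma card_ball_le (n pn : ℕ) (p : ℝ) (hp0 : 0 < p) (hp : p < 1/2) (hpn : p * n = pn) :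
    ((Finset.univ.filter fun e : Fin n → ZMod 2 => hammingNorm e ≤ pn).card : ℝ) ≤
      (2 : ℝ) ^ (binEnt p * n) := by
  have hq0 : 0 < 1 - p := by linarith
  have hpn_le : pn ≤ n := by
    have : (pn : ℝ) ≤ n := by rw [← hpn]; nlinarith [(Nat.cast_nonneg n : (0 : ℝ) ≤ n)]
    exact_mod_cast this
  have hmass : p ^ pn * (1 - p) ^ (n - pn) = (2 : ℝ) ^ (-(binEnt p * n)) := by
    have h1 : p ^ pn = (2 : ℝ) ^ (Real.logb 2 p * pn) := by
      rw [Real.rpow_mul (by norm_num), Real.rpow_logb (by norm_num) (by norm_num) hp0,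
        Real.rpow_natCast]
    have h2 : (1 - p) ^ (n - pn) = (2 : ℝ) ^ (Real.logb 2 (1 - p) * ((n - pn : ℕ) : ℝ)) := by
      rw [Real.rpow_mul (by norm_num), Real.rpow_logb (by norm_num) (by norm_num) hq0,
        Real.rpow_natCast]
    rw [h1, h2, ← Real.rpow_add (by norm_num)]
    congr 1
    rw [Nat.cast_sub hpn_le, ← hpn]
    unfold binEnt
    ring
  have hpoint : ∀ e ∈ Finset.univ.filter fun e : Fin n → ZMod 2 => hammingNorm e ≤ pn,
      p ^ pn * (1 - p) ^ (n - pn) ≤ p ^ hammingNorm e * (1 - p) ^ (n - hammingNorm e) := by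
    intro e he
    have hle : hammingNorm e ≤ pn := (Finset.mem_filter.mp he).2
    obtain ⟨d, hd⟩ := Nat.exists_eq_add_of_le hle
    have h1 : n - hammingNorm e = (n - pn) + d := by omega
    rw [h1, hd, pow_add, pow_add]
    have hd' : p ^ d ≤ (1 - p) ^ d := pow_le_pow_left₀ hp0.le (by linarith) d
    calc p ^ hammingNorm e * p ^ d * (1 - p) ^ (n - (hammingNorm e + d))
        ≤ p ^ hammingNorm e * (1 - p) ^ d * (1 - p) ^ (n - (hammingNorm e + d)) := by
          gcongr
      _ = _ := by ring
  have hsum : ((Finset.univ.filter fun e : Fin n → ZMod 2 => hammingNorm e ≤ pn).card : ℝ) *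
      (2 : ℝ) ^ (-(binEnt p * n)) ≤ 1 := by
    rw [← hmass, ← nsmul_eq_mul]
    refine (Finset.card_nsmul_le_sum _ _ _ hpoint).trans
      (le_of_le_of_eq ?_ (sum_prod_bernoulli n p))
    exact Finset.sum_le_sum_of_subset_of_nonneg (Finset.filter_subset _ _)
      (fun e _ _ => by positivity)
  rwa [Real.rpow_neg (by norm_num), ← div_eq_mul_inv, div_le_one (by positivity)] at hsum

/-! ### Bounded confusability implies reliability -/

/-- The confusability sum `V(Z,z,e)` of a code `X`. -/
noncomputable def confus {n Rn N : ℕ} (pn : ℕ) (S : Fin N → Finset (Fin Rn → ZMod 2))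
    (X : (Fin Rn → ZMod 2) → (Fin n → ZMod 2)) (Z : Finset (Fin n))
    (z : {i // i ∈ Z} → ZMod 2) (e : Fin n → ZMod 2) : ℝ :=
  ∑ i : Fin N,
    ∑ u ∈ (Finset.univ.filter (fun u : Fin Rn → ZMod 2 =>
        (fun i : {i // i ∈ Z} => X u i.val) = z)) ∩ S i,
      ∑ u' ∈ (S i)ᶜ,
        (if hammingDist (X u') (X u + e) ≤ pn then (1 : ℝ) else 0)

/-- A message decoded wrongly as `u'` is charged to a set `S i` separating it from `u'`: minimality
of the decoder puts `X u'` within distance `wt(e) ≤ pn` of `X u + e`. -/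
lemma sum_err_le_confus {n Rn N : ℕ} (pn : ℕ) (S : Fin N → Finset (Fin Rn → ZMod 2))
    (hS : ∀ u u' : Fin Rn → ZMod 2, u ≠ u' → ∃ i, u ∈ S i ∧ u' ∉ S i)
    (X : (Fin Rn → ZMod 2) → (Fin n → ZMod 2)) (φ : (Fin n → ZMod 2) → (Fin Rn → ZMod 2))
    (hφ : IsMinDistDecoder X φ) (Z : Finset (Fin n))
    (z : {i // i ∈ Z} → ZMod 2) (e : Fin n → ZMod 2) (he : hammingNorm e ≤ pn) :
    ∑ u ∈ Finset.univ.filter (fun u : Fin Rn → ZMod 2 =>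
        (fun i : {i // i ∈ Z} => X u i.val) = z),
      (if φ (X u + e) = u then (0 : ℝ) else 1) ≤ confus pn S X Z z e := by
  unfold confus
  generalize Finset.univ.filter (fun u : Fin Rn → ZMod 2 =>
    (fun i : {i // i ∈ Z} => X u i.val) = z) = O
  simp only [← Finset.filter_mem_eq_inter, Finset.sum_filter]
  rw [Finset.sum_comm]
  refine Finset.sum_le_sum fun u _ => ?_
  have hnonneg : ∀ i : Fin N, (0 : ℝ) ≤ if u ∈ S i then ∑ u' ∈ (S i)ᶜ,
      (if hammingDist (X u') (X u + e) ≤ pn then (1 : ℝ) else 0) else 0 := by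
    intro i
    positivity
  by_cases hu : φ (X u + e) = u
  · rw [if_pos hu]
    exact Finset.sum_nonneg fun i _ => hnonneg i
  rw [if_neg hu]
  obtain ⟨i, hui, hui'⟩ := hS u _ (Ne.symm hu)
  refine le_trans ?_ (Finset.single_le_sum (fun i _ => hnonneg i) (Finset.mem_univ i))
  rw [if_pos hui]
  refine le_trans ?_ (Finset.single_le_sum (f := fun u' =>
    if hammingDist (X u') (X u + e) ≤ pn then (1 : ℝ) else 0)
    (fun u' _ => by positivity) (Finset.mem_compl.mpr hui'))
  have hdist : hammingDist (X u) (X u + e) = hammingNorm e := by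
    simp [hammingDist, hammingNorm]
  have hle := hφ (X u + e) u
  rw [if_pos (by omega)]

/-- A uniform bound `c` on the confusability sums makes the code reliable: averaging over the
adversary's randomness and summing over the `2 ^ rn` observations `z` gives at most `2 ^ rn * c`
wrongly decoded messages on average, out of `2 ^ Rn`. -/
lemma reliable_of_confus_le {n Rn N : ℕ} (rn pn : ℕ) (δ c : ℝ)
    (S : Fin N → Finset (Fin Rn → ZMod 2))
    (hS : ∀ u u' : Fin Rn → ZMod 2, u ≠ u' → ∃ i, u ∈ S i ∧ u' ∉ S i)
    (hc : (2 : ℝ) ^ rn * c ≤ δ * (2 : ℝ) ^ Rn)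
    (X : (Fin Rn → ZMod 2) → (Fin n → ZMod 2))
    (hV : ∀ Z : Finset (Fin n), Z.card = rn → ∀ (z : {i // i ∈ Z} → ZMod 2)
      (e : Fin n → ZMod 2), hammingNorm e ≤ pn → confus pn S X Z z e ≤ c) :
    ReliableCode n rn pn Rn δ X := by
  rintro W We φ ⟨hW0, hWc, hW1, hE0, hEp, hE1⟩ hφ
  unfold decodeErrProb
  have hcardU : (Fintype.card (Fin Rn → ZMod 2) : ℝ) = 2 ^ Rn := by simp
  rw [hcardU, div_le_iff₀ (by positivity)]
  refine le_trans ?_ hc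
  rw [Finset.sum_comm]
  have hZ : ∀ Z : Finset (Fin n), (∑ u : Fin Rn → ZMod 2, ∑ e : Fin n → ZMod 2,
      W Z * We Z (fun i : {i // i ∈ Z} => X u i.val) e *
        (if φ (X u + e) = u then 0 else 1)) ≤ W Z * (2 ^ rn * c) := by
    intro Z
    by_cases hWZ : W Z = 0
    · simp [hWZ]
    have hcard := hWc Z hWZ
    simp only [mul_assoc, ← Finset.mul_sum]
    refine mul_le_mul_of_nonneg_left ?_ (hW0 Z)
    rw [← Finset.sum_fiberwise Finset.univ
      (fun (u : Fin Rn → ZMod 2) => (fun i : {i // i ∈ Z} => X u i.val))]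
    have hz : ∀ z : {i // i ∈ Z} → ZMod 2,
        (∑ u ∈ Finset.univ.filter (fun u : Fin Rn → ZMod 2 =>
            (fun i : {i // i ∈ Z} => X u i.val) = z), ∑ e : Fin n → ZMod 2,
          We Z (fun i : {i // i ∈ Z} => X u i.val) e *
            (if φ (X u + e) = u then (0 : ℝ) else 1)) ≤ c := by
      intro z
      calc _ = ∑ u ∈ Finset.univ.filter (fun u : Fin Rn → ZMod 2 =>
            (fun i : {i // i ∈ Z} => X u i.val) = z), ∑ e : Fin n → ZMod 2,
          We Z z e * (if φ (X u + e) = u then (0 : ℝ) else 1) := by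
            refine Finset.sum_congr rfl fun u hu => ?_
            rw [(Finset.mem_filter.mp hu).2]
        _ = ∑ e : Fin n → ZMod 2, We Z z e *
            ∑ u ∈ Finset.univ.filter (fun u : Fin Rn → ZMod 2 =>
              (fun i : {i // i ∈ Z} => X u i.val) = z),
              (if φ (X u + e) = u then (0 : ℝ) else 1) := by
            rw [Finset.sum_comm]
            simp only [Finset.mul_sum]
        _ ≤ ∑ e : Fin n → ZMod 2, We Z z e * c := by
            refine Finset.sum_le_sum fun e _ => ?_
            by_cases he0 : We Z z e = 0
            · simp [he0]
            have hep := hEp Z z e he0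
            exact mul_le_mul_of_nonneg_left
              ((sum_err_le_confus pn S hS X φ hφ Z z e hep).trans (hV Z hcard z e hep))
              (hE0 Z z e)
        _ = c := by rw [← Finset.sum_mul, hE1, one_mul]
    refine (Finset.sum_le_sum fun z _ => hz z).trans (le_of_eq ?_)
    simp [hcard]
  refine (Finset.sum_le_sum fun Z _ => hZ Z).trans (le_of_eq ?_)
  rw [← Finset.sum_mul, hW1, one_mul]

/-- Sufficient Condition 2: in the adversarial wiretap setting with a random
pseudolinear code `X(u) = G·h(u)`, if (i) for every `Z, z, e` and every matrix `A` for which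
`{Z(G)=A}` has positive probability and implies `H(Z)ᶜ`, the conditional probability that the
confusability sum `V(Z,z,e)` exceeds `δ·2^{(R−r)n}` is at most `β`, and (ii) `P(H(Z)) ≤ η`
for every `Z`, then with probability at least `1 − 2^{(1+r+H₂(p))n}·β − 2^n·η` over `G`, the
code is reliable with error probability `δ`. -/
theorem sufficient_condition_two
    (p r R δ θ : ℝ) (k n Rn rn pn m : ℕ)
    (hp0 : 0 < p) (hp : p < 1/2) (hr0 : 0 < r) (hr1 : r < 1)
    (hrR : r < R) (hR1 : R ≤ 1) (hδ : 0 < δ) (hθ : 0 < θ) (hk : 2 ≤ k)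
    (hn : 1 ≤ n) (hm : 1 ≤ m)
    (hRn : R * n = Rn) (hrn : r * n = rn) (hpn : p * n = pn)
    (h : (Fin Rn → ZMod 2) → (Fin m → ZMod 2))
    (hli : ∀ T : Finset (Fin Rn → ZMod 2), T.card = k →
      LinearIndependent (ZMod 2) (fun u : {x // x ∈ T} => h u.val))
    (S : Fin (10 * n) → Finset (Fin Rn → ZMod 2))
    (hS : ∀ u u' : Fin Rn → ZMod 2, u ≠ u' → ∃ i, u ∈ S i ∧ u' ∉ S i)
    (β η : ℝ) (hβ : 0 < β) (hη : 0 < η)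
    (hi : ∀ Z : Finset (Fin n), Z.card = rn →
      ∀ z : {i // i ∈ Z} → ZMod 2,
      ∀ e : Fin n → ZMod 2, hammingNorm e ≤ pn →
      ∀ A : Matrix {i // i ∈ Z} (Fin m) (ZMod 2),
        0 < unifPr (fun G : Matrix (Fin n) (Fin m) (ZMod 2) => rowRestrict Z G = A) →
        (∀ G : Matrix (Fin n) (Fin m) (ZMod 2), rowRestrict Z G = A →
          ¬ ∃ s : {i // i ∈ Z} → ZMod 2,
            (2 : ℝ) ^ ((R - r) * n + θ * n) <
              ((Finset.univ.filter (fun u : Fin Rn → ZMod 2 =>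
                  (fun i : {i // i ∈ Z} => G.mulVec (h u) i.val) = s)).card : ℝ)) →
        unifCondPr
          (fun G : Matrix (Fin n) (Fin m) (ZMod 2) =>
            δ * (2 : ℝ) ^ ((R - r) * n) <
              ∑ i : Fin (10 * n),
                ∑ u ∈ (Finset.univ.filter (fun u : Fin Rn → ZMod 2 =>
                    (fun i : {i // i ∈ Z} => G.mulVec (h u) i.val) = z)) ∩ S i,
                  ∑ u' ∈ (S i)ᶜ,
                    (if hammingDist (G.mulVec (h u')) (G.mulVec (h u) + e) ≤ pn
                      then (1 : ℝ) else 0))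
          (fun G => rowRestrict Z G = A) ≤ β)
    (hii : ∀ Z : Finset (Fin n), Z.card = rn →
      unifPr (fun G : Matrix (Fin n) (Fin m) (ZMod 2) =>
        ∃ s : {i // i ∈ Z} → ZMod 2,
          (2 : ℝ) ^ ((R - r) * n + θ * n) <
            ((Finset.univ.filter (fun u : Fin Rn → ZMod 2 =>
                (fun i : {i // i ∈ Z} => G.mulVec (h u) i.val) = s)).card : ℝ)) ≤ η) :
    1 - (2 : ℝ) ^ ((1 + r + binEnt p) * n) * β - (2 : ℝ) ^ n * η ≤
      unifPr (fun G : Matrix (Fin n) (Fin m) (ZMod 2) =>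
        ReliableCode n rn pn Rn δ (fun u => G.mulVec (h u))) := by
  classical
  -- `Hev Z G` is the event `H(Z)`; `Vev` is the event that `V(Z,z,e)` is large.
  let Hev : Finset (Fin n) → Matrix (Fin n) (Fin m) (ZMod 2) → Prop := fun Z G =>
    ∃ s : {i // i ∈ Z} → ZMod 2,
      (2 : ℝ) ^ ((R - r) * n + θ * n) <
        ((Finset.univ.filter (fun u : Fin Rn → ZMod 2 =>
            (fun i : {i // i ∈ Z} => G.mulVec (h u) i.val) = s)).card : ℝ)
  let Vev : (Z : Finset (Fin n)) → ({i // i ∈ Z} → ZMod 2) → (Fin n → ZMod 2) →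
      Matrix (Fin n) (Fin m) (ZMod 2) → Prop := fun Z z e G =>
    δ * (2 : ℝ) ^ ((R - r) * n) < confus pn S (fun u => G.mulVec (h u)) Z z e
  let Zs : Finset (Finset (Fin n)) := Finset.univ.filter fun Z => Z.card = rn
  let Es : Finset (Fin n → ZMod 2) := Finset.univ.filter fun e => hammingNorm e ≤ pn
  have hHdep : ∀ Z G G', rowRestrict Z G = rowRestrict Z G' → Hev Z G → Hev Z G' := by
    rintro Z G G' hGG ⟨s, hs⟩
    refine ⟨s, ?_⟩
    have hrow : ∀ u : Fin Rn → ZMod 2, (fun i : {i // i ∈ Z} => G.mulVec (h u) i.val) =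
        (fun i : {i // i ∈ Z} => G'.mulVec (h u) i.val) := by
      intro u
      funext i
      have hi' : G i.val = G' i.val := congrFun hGG i
      simp only [Matrix.mulVec, hi']
    simpa only [hrow] using hs
  have hV : ∀ Z ∈ Zs, ∀ z, ∀ e ∈ Es, unifPr (fun G => Vev Z z e G ∧ ¬ Hev Z G) ≤ β := by
    intro Z hZ z e he
    exact unifPr_and_not_le (rowRestrict Z) _ _ (hHdep Z) β hβ.le
      (fun A => hi Z (Finset.mem_filter.mp hZ).2 z e (Finset.mem_filter.mp he).2 A)
  have hbad : ∀ G : Matrix (Fin n) (Fin m) (ZMod 2),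
      ¬ ReliableCode n rn pn Rn δ (fun u => G.mulVec (h u)) →
      (∃ Z ∈ Zs, ∃ z ∈ (Finset.univ : Finset ({i // i ∈ Z} → ZMod 2)), ∃ e ∈ Es,
        Vev Z z e G ∧ ¬ Hev Z G) ∨ ∃ Z ∈ Zs, Hev Z G := by
    intro G hG
    by_contra hcon
    push Not at hcon
    obtain ⟨h1, h2⟩ := hcon
    refine hG (reliable_of_confus_le rn pn δ (δ * (2 : ℝ) ^ ((R - r) * n)) S hS
      (le_of_eq ?_) _ fun Z hZ z e he => ?_)
    · rw [mul_left_comm, ← Real.rpow_natCast 2 rn, ← Real.rpow_natCast 2 Rn,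
        ← Real.rpow_add (by norm_num), ← hrn, ← hRn]
      ring_nf
    · have hZ' : Z ∈ Zs := by simp [Zs, hZ]
      by_contra hlt
      exact h2 Z hZ' (h1 Z hZ' z (Finset.mem_univ _) e (by simp [Es, he]) (not_le.mp hlt))
  have hZs : (Zs.card : ℝ) ≤ 2 ^ n := by
    have := Finset.card_filter_le (Finset.univ : Finset (Finset (Fin n))) (fun Z => Z.card = rn)
    simp only [Finset.card_univ, Fintype.card_finset, Fintype.card_fin] at this
    exact_mod_cast this
  have hEs : (Es.card : ℝ) ≤ (2 : ℝ) ^ (binEnt p * n) := card_ball_le n pn p hp0 hp hpn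
  have hfirst : unifPr (fun G => ∃ Z ∈ Zs,
      ∃ z ∈ (Finset.univ : Finset ({i // i ∈ Z} → ZMod 2)), ∃ e ∈ Es,
        Vev Z z e G ∧ ¬ Hev Z G) ≤ (2 : ℝ) ^ ((1 + r + binEnt p) * n) * β := by
    calc _ ≤ ∑ Z ∈ Zs, ∑ z : {i // i ∈ Z} → ZMod 2, ∑ e ∈ Es,
          unifPr (fun G => Vev Z z e G ∧ ¬ Hev Z G) := by
          refine (unifPr_exists_le _ _).trans (Finset.sum_le_sum fun Z _ => ?_)
          refine (unifPr_exists_le _ _).trans (Finset.sum_le_sum fun z _ => ?_)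
          exact unifPr_exists_le _ _
      _ ≤ ∑ Z ∈ Zs, ∑ z : {i // i ∈ Z} → ZMod 2, ∑ e ∈ Es, β :=
          Finset.sum_le_sum fun Z hZ => Finset.sum_le_sum fun z _ =>
            Finset.sum_le_sum fun e he => hV Z hZ z e he
      _ = ∑ Z ∈ Zs, (2 : ℝ) ^ rn * (Es.card * β) := by
          refine Finset.sum_congr rfl fun Z hZ => ?_
          have hc : Z.card = rn := (Finset.mem_filter.mp hZ).2
          simp [hc]
      _ = Zs.card * ((2 : ℝ) ^ rn * (Es.card * β)) := by
          rw [Finset.sum_const, nsmul_eq_mul]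
      _ ≤ 2 ^ n * ((2 : ℝ) ^ rn * ((2 : ℝ) ^ (binEnt p * n) * β)) := by gcongr
      _ = _ := by
          rw [← Real.rpow_natCast 2 rn, ← Real.rpow_natCast 2 n, ← mul_assoc, ← mul_assoc,
            ← Real.rpow_add (by norm_num), ← Real.rpow_add (by norm_num), ← hrn]
          ring_nf
  have hsecond : unifPr (fun G => ∃ Z ∈ Zs, Hev Z G) ≤ (2 : ℝ) ^ n * η := by
    refine (unifPr_exists_le _ _).trans ?_
    refine (Finset.sum_le_sum fun Z hZ => hii Z (Finset.mem_filter.mp hZ).2).trans ?_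
    rw [Finset.sum_const, nsmul_eq_mul]
    gcongr
  rw [unifPr_compl]
  have hunion := (unifPr_mono hbad).trans (unifPr_or_le _ _)
  linarith
end
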